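/- Suppose |ε_t| ≤ B almost surely and Var(ε_t | F_{t-1}) = σ² for all t ≥ 1, with B > 0 and σ² a constant. Let s_t = ‖(ρI + V_t)^{-1/2} M_t‖. Let (σ̂_t²)_{t≥1} be a process adapted to (F_t) such that P(∃ t ≥ 1 : σ̂_t² < σ²) ≤ δ₁, and set ν̂_t = σ̂_t² Σ_{i=1}^t ‖G_i‖². For a > 0 and x ≥ 0 let γ̄(a, x) = (∫_x^∞ u^{a−1} e^{−u} du)/Γ(a). Then for any θ > 0 and δ₁, δ₂ ∈ (0,1), with probability at least 1 − (δ₁ + δ₂) it holds simultaneously for all t ≥ 1 that [ (θ/B²)^{θ/B²} / ( Γ(θ/B²) · γ̄(θ/B², θ/B²) ) ] · [ Γ((B s_t + ν̂_t + θ)/B²) · γ̄((B s_t + ν̂_t + θ)/B², (ν̂_t + θ)/B²) / ((ν̂_t + θ)/B²)^{(B s_t + ν̂_t + θ)/B²} ] · exp(ν̂_t / B²) < 2/δ₂. -/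

import Mathlib

open MeasureTheory Filter Real
open scoped RealInnerProductSpace

noncomputable def outerProd {H : Type*} [NormedAddCommGroup H] [InnerProductSpace ℝ H]
    (x : H) : H →L[ℝ] H :=
  (innerSL ℝ x).smulRight x

noncomputable def upperGammaReg (a x : ℝ) : ℝ :=
  (∫ u in Set.Ioi x, u ^ (a - 1) * Real.exp (-u)) / Real.Gamma a

noncomputable def mixedBennettExpr (B θ ν s : ℝ) : ℝ :=
  ((θ / B ^ 2) ^ (θ / B ^ 2) /
      (Real.Gamma (θ / B ^ 2) * upperGammaReg (θ / B ^ 2) (θ / B ^ 2))) *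
    (Real.Gamma ((B * s + ν + θ) / B ^ 2) *
        upperGammaReg ((B * s + ν + θ) / B ^ 2) ((ν + θ) / B ^ 2) /
      ((ν + θ) / B ^ 2) ^ ((B * s + ν + θ) / B ^ 2)) *
    Real.exp (ν / B ^ 2)
theorem aux_cosh_conv (u v r w : ℝ) (hw0 : 0 ≤ w) (hw1 : w ≤ 1)
    (h : r ^ 2 = w * u ^ 2 + (1 - w) * v ^ 2) :
    Real.cosh r ≤ w * Real.cosh u + (1 - w) * Real.cosh v := by
  have h1 := Real.hasSum_cosh r
  have h2 := ((Real.hasSum_cosh u).mul_left w).add ((Real.hasSum_cosh v).mul_left (1 - w))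
  refine hasSum_le (fun n => ?_) h1 h2
  have hc := (convexOn_pow (𝕜 := ℝ) n).2 (sq_nonneg u) (sq_nonneg v) hw0 (sub_nonneg.2 hw1)
    (by ring)
  simp only [smul_eq_mul] at hc
  rw [← h] at hc
  simp only [← pow_mul] at hc
  rw [← mul_div_assoc, ← mul_div_assoc, ← add_div]
  gcongr

theorem aux_sinh_ge (b : ℝ) (hb : 0 ≤ b) : b ≤ Real.sinh b := Real.self_le_sinh_iff.2 hb

theorem aux_cosh_end (a b : ℝ) (ha : 0 ≤ a) (hb : 0 ≤ b) :
    Real.cosh (a + b) ≤ Real.cosh a * (Real.exp b - b) + b * Real.sinh a ∧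
    Real.cosh (a - b) ≤ Real.cosh a * (Real.exp b - b) - b * Real.sinh a := by
  have h1 := aux_sinh_ge b hb
  have h2 : 0 ≤ Real.sinh a := Real.sinh_nonneg_iff.2 ha
  have h3 : Real.sinh a ≤ Real.cosh a := (Real.sinh_lt_cosh a).le
  rw [Real.cosh_add, Real.cosh_sub, ← Real.cosh_add_sinh b]
  constructor <;> nlinarith [mul_nonneg (sub_nonneg.2 h1) (sub_nonneg.2 h3), mul_nonneg (sub_nonneg.2 h1) h2]

/-- Pinelis-type deterministic bound. -/
theorem aux_pinelis (a b p r : ℝ) (ha : 0 ≤ a) (hb : 0 ≤ b) (hp : |p| ≤ a * b)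
    (hr : r ^ 2 = a ^ 2 + 2 * p + b ^ 2) :
    Real.cosh r ≤ Real.cosh a * (Real.exp b - b) + p * (Real.sinh a / a) := by
  obtain ⟨e1, e2⟩ := aux_cosh_end a b ha hb
  obtain ⟨p1, p2⟩ := abs_le.1 hp
  rcases (mul_nonneg ha hb).eq_or_lt' with h0 | h0
  · have hp0 : p = 0 := by rw [h0] at hp; simpa using hp
    have hs : 0 ≤ b * Real.sinh a := mul_nonneg hb (Real.sinh_nonneg_iff.2 ha)
    have : Real.cosh r = Real.cosh (a - b) := by
      rw [← Real.cosh_abs r, ← Real.cosh_abs (a - b)]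
      congr 1
      rw [← sq_eq_sq_iff_abs_eq_abs, hr]
      nlinarith
    rw [this, hp0]; linarith
  · have ha' : a ≠ 0 := by rintro rfl; simp at h0
    have hb' : b ≠ 0 := by rintro rfl; simp at h0
    have hc := aux_cosh_conv (a + b) (a - b) r ((1 + p / (a * b)) / 2)
      (by
        have : -1 ≤ p / (a * b) := by rw [le_div_iff₀ h0]; linarith
        linarith)
      (by
        have : p / (a * b) ≤ 1 := by rw [div_le_iff₀ h0]; linarith
        linarith)
      (by rw [hr]; field_simp; ring)
    have w0 : 0 ≤ (1 + p / (a * b)) / 2 := by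
        have : -1 ≤ p / (a * b) := by rw [le_div_iff₀ h0]; linarith
        linarith
    have w1 : 0 ≤ 1 - (1 + p / (a * b)) / 2 := by
        have : p / (a * b) ≤ 1 := by rw [div_le_iff₀ h0]; linarith
        linarith
    have := add_le_add (mul_le_mul_of_nonneg_left e1 w0) (mul_le_mul_of_nonneg_left e2 w1)
    refine hc.trans (this.trans (le_of_eq ?_))
    field_simp
    ring

theorem aux_exp_hasSum (x : ℝ) :
    HasSum (fun n : ℕ => x ^ (n + 2) / ((n + 2).factorial : ℝ)) (Real.exp x - 1 - x) := by
  have h : HasSum (fun n : ℕ => x ^ n / (n.factorial : ℝ)) (Real.exp x) := by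
    rw [Real.exp_eq_exp_ℝ]; exact NormedSpace.expSeries_div_hasSum_exp x
  have := (hasSum_nat_add_iff' 2).2 h
  simpa [Finset.sum_range_succ, sub_sub] using this

theorem aux_bennett (r x : ℝ) (hr0 : 0 ≤ r) (hr1 : r ≤ 1) (hx : 0 ≤ x) :
    Real.exp (r * x) - 1 - r * x ≤ r ^ 2 * (Real.exp x - 1 - x) := by
  refine hasSum_le (fun n => ?_) (aux_exp_hasSum (r * x)) ((aux_exp_hasSum x).mul_left (r ^ 2))
  rw [← mul_div_assoc, mul_pow]
  gcongr ?_ * _ / _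
  exact pow_le_pow_of_le_one hr0 hr1 (by omega)

/-- One step deterministic bound. -/
theorem aux_step (B l y e g q s' : ℝ) (hB : 0 < B) (hl : 0 ≤ l) (hy : 0 ≤ y) (hg : 0 ≤ g)
    (hg1 : g ≤ 1) (he : |e| ≤ B) (hq : |q| ≤ y * g)
    (hs : s' ^ 2 = y ^ 2 + 2 * (e * q) + e ^ 2 * g ^ 2) :
    Real.cosh (l * s') ≤ Real.cosh (l * y) *
        (1 + e ^ 2 * (g ^ 2 * ((Real.exp (B * l) - 1 - B * l) / B ^ 2)))
      + e * (l ^ 2 * q * (Real.sinh (l * y) / (l * y))) := by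
  have h1 := aux_pinelis (l * y) (l * (|e| * g)) (l ^ 2 * (e * q)) (l * s') (by positivity)
    (by positivity)
    (by
      rw [abs_mul, abs_mul, abs_of_nonneg (by positivity : 0 ≤ l ^ 2)]
      calc l ^ 2 * (|e| * |q|) ≤ l ^ 2 * (|e| * (y * g)) := by gcongr
        _ = _ := by ring)
    (by
      have : |e| ^ 2 = e ^ 2 := sq_abs e
      rw [mul_pow, hs]
      linear_combination (- l ^ 2 * g ^ 2) * this)
  have h2 := aux_bennett (|e| * g / B) (B * l) (by positivity)
    (by rw [div_le_one hB]; nlinarith [abs_nonneg e]) (by positivity)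
  have h3 : |e| * g / B * (B * l) = l * (|e| * g) := by field_simp
  have h4 : (|e| * g / B) ^ 2 * (Real.exp (B * l) - 1 - B * l) =
      e ^ 2 * (g ^ 2 * ((Real.exp (B * l) - 1 - B * l) / B ^ 2)) := by
    rw [← sq_abs e]; field_simp
  rw [h3, h4] at h2
  refine h1.trans ?_
  have : Real.cosh (l * y) * (Real.exp (l * (|e| * g)) - l * (|e| * g)) ≤ Real.cosh (l * y) *
        (1 + e ^ 2 * (g ^ 2 * ((Real.exp (B * l) - 1 - B * l) / B ^ 2))) := by
    apply mul_le_mul_of_nonneg_left _ (Real.cosh_pos _).le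
    linarith
  linarith [this]

/-- Ville's inequality. -/
theorem aux_ville {Ω : Type*} {m0 : MeasurableSpace Ω} {μ : Measure Ω}
    (ℱ : Filtration ℕ m0) (f : ℕ → Ω → ENNReal)
    (hf : ∀ n, Measurable[ℱ n] (f n))
    (hs : ∀ n A, MeasurableSet[ℱ n] A → ∫⁻ ω in A, f (n + 1) ω ∂μ ≤ ∫⁻ ω in A, f n ω ∂μ)
    (c : ENNReal) : c * μ {ω | ∃ n, c ≤ f n ω} ≤ ∫⁻ ω, f 0 ω ∂μ := by
  let S : ℕ → Set Ω := fun n => {ω | ∃ k ≤ n, c ≤ f k ω}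
  have hS : ∀ n, MeasurableSet[ℱ n] (S n) := by
    intro n
    have : S n = ⋃ k ∈ Set.Iic n, {ω | c ≤ f k ω} := by
      ext ω; simp [S]
    rw [this]
    refine MeasurableSet.biUnion (Set.to_countable _) (fun k hk => ?_)
    exact ℱ.mono hk _ (@measurableSet_le _ _ _ _ _ (ℱ k) _ _ _ _ _ measurable_const (hf k))
  have key : ∀ n, c * μ (S n) + ∫⁻ ω in (S n)ᶜ, f n ω ∂μ ≤ ∫⁻ ω, f 0 ω ∂μ := by
    intro n
    induction n with
    | zero =>
      rw [← lintegral_add_compl (μ := μ) (f 0) (ℱ.le _ _ (hS 0))]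
      refine add_le_add ?_ le_rfl
      rw [← setLIntegral_const]
      refine setLIntegral_mono ((hf 0).mono (ℱ.le _) le_rfl) ?_
      rintro ω ⟨k, hk, h⟩
      obtain rfl : k = 0 := by omega
      exact h
    | succ n ih =>
      refine le_trans ?_ ih
      have hT : MeasurableSet {ω | c ≤ f (n + 1) ω} :=
        ℱ.le (n + 1) _ (@measurableSet_le _ _ _ _ _ (ℱ (n+1)) _ _ _ _ _ measurable_const (hf (n+1)))
      set T := {ω | c ≤ f (n + 1) ω} with hTdef
      have hSn := ℱ.le _ _ (hS n)
      have hU : S (n + 1) = S n ∪ ((S n)ᶜ ∩ T) := by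
        ext ω
        simp only [S, Set.mem_ofPred_eq, Set.mem_union, Set.mem_inter_iff, Set.mem_compl_iff, hTdef]
        constructor
        · rintro ⟨k, hk, h⟩
          by_cases hh : ∃ k ≤ n, c ≤ f k ω
          · exact Or.inl hh
          · refine Or.inr ⟨hh, ?_⟩
            rcases Nat.le_succ_iff.1 hk with h' | h'
            · exact absurd ⟨k, h', h⟩ hh
            · subst h'; exact h
        · rintro (⟨k, hk, h⟩ | ⟨_, h⟩)
          · exact ⟨k, by omega, h⟩
          · exact ⟨n + 1, le_rfl, h⟩
      have hV : (S (n + 1))ᶜ = (S n)ᶜ \ T := by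
        rw [hU]; ext ω; simp only [Set.mem_compl_iff, Set.mem_union, Set.mem_inter_iff, Set.mem_sdiff]; tauto
      have h1 := hs n (S n)ᶜ (hS n).compl
      rw [← lintegral_inter_add_sdiff (f (n + 1)) (S n)ᶜ hT] at h1
      have h2 : c * μ ((S n)ᶜ ∩ T) ≤ ∫⁻ ω in (S n)ᶜ ∩ T, f (n + 1) ω ∂μ := by
        rw [← setLIntegral_const]
        refine setLIntegral_mono ((hf _).mono (ℱ.le _) le_rfl) ?_
        rintro ω ⟨_, h⟩
        exact h
      calc c * μ (S (n + 1)) + ∫⁻ ω in (S (n + 1))ᶜ, f (n + 1) ω ∂μ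
          ≤ c * (μ (S n) + μ ((S n)ᶜ ∩ T)) + ∫⁻ ω in (S n)ᶜ \ T, f (n + 1) ω ∂μ := by
            rw [hV, hU]; gcongr; exact measure_union_le _ _
        _ = c * μ (S n) + (c * μ ((S n)ᶜ ∩ T) + ∫⁻ ω in (S n)ᶜ \ T, f (n + 1) ω ∂μ) := by ring
        _ ≤ c * μ (S n) + ∫⁻ ω in (S n)ᶜ, f n ω ∂μ := by
            gcongr
            exact (add_le_add_left h2 _).trans h1
  have hU : {ω | ∃ n, c ≤ f n ω} = ⋃ n, S n := by
    ext ω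
    simp only [S, Set.mem_ofPred_eq, Set.mem_iUnion]
    exact ⟨fun ⟨n, h⟩ => ⟨n, n, le_rfl, h⟩, fun ⟨_, k, _, h⟩ => ⟨k, h⟩⟩
  have hmono : Monotone S := fun n m h ω ⟨k, hk, h'⟩ => ⟨k, hk.trans h, h'⟩
  rw [hU, hmono.measure_iUnion, ENNReal.mul_iSup]
  exact iSup_le fun n => le_self_add.trans (key n)

theorem aux_sym {H : Type*} [NormedAddCommGroup H] [InnerProductSpace ℝ H]
    (Q Qi : H →L[ℝ] H) (hQ : Q.IsPositive) (h2 : Q ∘L Qi = 1) (x y : H) :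
    ⟪Qi x, y⟫ = ⟪x, Qi y⟫ := by
  have e : ∀ z, Q (Qi z) = z := fun z => by
    have := congrArg (fun T : H →L[ℝ] H => T z) h2
    simpa using this
  have hs : ⟪Q (Qi x), Qi y⟫ = ⟪Qi x, Q (Qi y)⟫ := hQ.1 (Qi x) (Qi y)
  rw [e, e] at hs
  exact hs.symm

theorem aux_op {H : Type*} [NormedAddCommGroup H] [InnerProductSpace ℝ H]
    (Q Qi Q' Qi' : H →L[ℝ] H) (x : H) (hQ : Q.IsPositive) (hQ' : Q'.IsPositive)
    (h : Q' ∘L Q' = Q ∘L Q + outerProd x)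
    (h1 : Qi ∘L Q = 1) (h2 : Q ∘L Qi = 1) (h2' : Q' ∘L Qi' = 1) :
    (∀ y, Qi' (Qi' y) = Qi (Qi y) - (⟪x, Qi (Qi y)⟫ / (1 + ⟪x, Qi (Qi x)⟫)) • Qi (Qi x)) ∧
    (∀ y, ‖Qi' y‖ ≤ ‖Qi y‖) ∧ ‖Qi' x‖ ≤ 1 := by
  have s := aux_sym Q Qi hQ h2
  have s' := aux_sym Q' Qi' hQ' h2'
  have e1 : ∀ z, Qi (Q z) = z := fun z => by
    simpa using congrArg (fun T : H →L[ℝ] H => T z) h1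
  have e2' : ∀ z, Q' (Qi' z) = z := fun z => by
    simpa using congrArg (fun T : H →L[ℝ] H => T z) h2'
  have eA : ∀ z, Q' (Q' z) = Q (Q z) + ⟪x, z⟫ • x := fun z => by
    simpa [outerProd] using congrArg (fun T : H →L[ℝ] H => T z) h
  have hn : ∀ z, ⟪z, Qi (Qi z)⟫ = ‖Qi z‖ ^ 2 := fun z => by
    rw [← s, real_inner_self_eq_norm_sq]
  have hn' : ∀ z, ⟪z, Qi' (Qi' z)⟫ = ‖Qi' z‖ ^ 2 := fun z => by
    rw [← s', real_inner_self_eq_norm_sq]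
  have hpos : 0 < 1 + ⟪x, Qi (Qi x)⟫ := by rw [hn]; positivity
  have main : ∀ y, Qi' (Qi' y) =
      Qi (Qi y) - (⟪x, Qi (Qi y)⟫ / (1 + ⟪x, Qi (Qi x)⟫)) • Qi (Qi x) := by
    intro y
    set z := Qi' (Qi' y) with hz
    have a1 := eA z
    rw [hz, e2', e2', ← hz] at a1
    have a2 : Qi (Qi y) = z + ⟪x, z⟫ • Qi (Qi x) := by
      conv_lhs => rw [a1]
      simp [e1]
    have a3 : ⟪x, Qi (Qi y)⟫ = ⟪x, z⟫ * (1 + ⟪x, Qi (Qi x)⟫) := by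
      rw [a2, inner_add_right, inner_smul_right]; ring
    rw [a3, mul_div_cancel_right₀ _ hpos.ne', a2]; abel
  have main2 : ∀ y, ‖Qi' y‖ ^ 2 = ‖Qi y‖ ^ 2 - ⟪x, Qi (Qi y)⟫ ^ 2 / (1 + ⟪x, Qi (Qi x)⟫) := by
    intro y
    rw [← hn', main, inner_sub_right, hn, inner_smul_right]
    have : ⟪y, Qi (Qi x)⟫ = ⟪x, Qi (Qi y)⟫ := by
      rw [← s, ← s, real_inner_comm]
    rw [this]; ring
  refine ⟨main, fun y => ?_, ?_⟩
  · apply (pow_le_pow_iff_left₀ (norm_nonneg _) (norm_nonneg _) two_ne_zero).1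
    rw [main2]
    have : 0 ≤ ⟪x, Qi (Qi y)⟫ ^ 2 / (1 + ⟪x, Qi (Qi x)⟫) := by positivity
    linarith
  · have := main2 x
    rw [← hn x] at this
    apply (pow_le_pow_iff_left₀ (norm_nonneg _) zero_le_one two_ne_zero).1
    rw [this]
    have h0 : 0 ≤ ⟪x, Qi (Qi x)⟫ := by rw [hn]; positivity
    rw [sub_le_iff_le_add, one_pow, ← sub_le_iff_le_add', le_div_iff₀ hpos]
    nlinarith

theorem aux_meas {H : Type*} [NormedAddCommGroup H] [InnerProductSpace ℝ H]
    {Ω : Type*} (X : ℕ → Ω → H) (ρ : ℝ) (hρ : 0 < ρ)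
    (Q Qinv : ℕ → Ω → H →L[ℝ] H)
    (hQpos : ∀ t ω, (Q t ω).IsPositive)
    (hQsq : ∀ t ω, Q t ω ∘L Q t ω =
      ρ • (1 : H →L[ℝ] H) + ∑ i ∈ Finset.Icc 1 t, outerProd (X i ω))
    (hQinv : ∀ t ω, Qinv t ω ∘L Q t ω = 1 ∧ Q t ω ∘L Qinv t ω = 1)
    (m : MeasurableSpace Ω) (n : ℕ)
    (hX : ∀ i, 1 ≤ i → i ≤ n → StronglyMeasurable[m] (X i)) (y : Ω → H)
    (hy : StronglyMeasurable[m] y) :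
    StronglyMeasurable[m] (fun ω => Qinv n ω (Qinv n ω (y ω))) := by
  induction n generalizing y with
  | zero =>
    have : (fun ω => Qinv 0 ω (Qinv 0 ω (y ω))) = fun ω => ρ⁻¹ • y ω := by
      funext ω
      have h := hQsq 0 ω
      have e1 : ∀ z, Qinv 0 ω (Q 0 ω z) = z := fun z => by
        simpa using congrArg (fun T : H →L[ℝ] H => T z) (hQinv 0 ω).1
      have e := congrArg (fun T : H →L[ℝ] H => T (ρ⁻¹ • y ω)) h
      simp only [Finset.Icc_eq_empty_of_lt zero_lt_one, Finset.sum_empty, add_zero] at e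
      have e' : Q 0 ω (Q 0 ω (ρ⁻¹ • y ω)) = y ω := by
        refine e.trans ?_
        simp [smul_smul, hρ.ne']
      conv_lhs => rw [← e']
      rw [e1, e1]
    rw [this]
    exact hy.const_smul _
  | succ n ih =>
    have hx := hX (n + 1) (by omega) le_rfl
    have i1 := fun y hy => ih (fun i h1 h2 => hX i h1 (by omega)) y hy
    have : (fun ω => Qinv (n + 1) ω (Qinv (n + 1) ω (y ω))) = fun ω =>
        Qinv n ω (Qinv n ω (y ω)) -
          (⟪X (n + 1) ω, Qinv n ω (Qinv n ω (y ω))⟫ /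
            (1 + ⟪X (n + 1) ω, Qinv n ω (Qinv n ω (X (n + 1) ω))⟫)) •
          Qinv n ω (Qinv n ω (X (n + 1) ω)) := by
      funext ω
      refine (aux_op (Q n ω) (Qinv n ω) (Q (n + 1) ω) (Qinv (n + 1) ω) (X (n + 1) ω)
        (hQpos _ _) (hQpos _ _) ?_ (hQinv _ _).1 (hQinv _ _).2 (hQinv _ _).2).1 (y ω)
      rw [hQsq, hQsq, Finset.sum_Icc_succ_top (by omega), add_assoc]
    rw [this]
    refine (i1 y hy).sub (StronglyMeasurable.smul ?_ (i1 _ hx))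
    exact (hx.inner (i1 y hy)).div (stronglyMeasurable_const.add (hx.inner (i1 _ hx)))

theorem aux_cond {Ω : Type*} {m m0 : MeasurableSpace Ω} {μ : Measure Ω} [IsProbabilityMeasure μ]
    (hm : m ≤ m0) (U e : Ω → ℝ) (hU : StronglyMeasurable[m] U) (C : ℝ)
    (hC : ∀ᵐ ω ∂μ, |U ω| ≤ C) (he : Integrable e μ) (k : ℝ)
    (hk : μ[e | m] =ᵐ[μ] fun _ => k) (A : Set Ω) (hA : MeasurableSet[m] A) :
    Integrable (fun ω => U ω * e ω) μ ∧
    ∫ ω in A, U ω * e ω ∂μ = ∫ ω in A, U ω * k ∂μ := by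
  have hi : Integrable (fun ω => U ω * e ω) μ :=
    he.bdd_mul (hU.mono hm).aestronglyMeasurable (by simpa using hC)
  refine ⟨hi, ?_⟩
  rw [← setIntegral_condExp hm hi hA]
  have h1 := condExp_mul_of_stronglyMeasurable_left (μ := μ) hU hi he
  refine setIntegral_congr_ae (hm _ hA) ?_
  filter_upwards [h1, hk] with ω h1 h2 _
  rw [← h2]; exact h1

theorem aux_cov (B c a : ℝ) (hB : 0 < B) (hc : 0 < c) :
    ∫ u in Set.Ioi c, u ^ (a - 1) * Real.exp (-u) =
      ∫ l in Set.Ioi (0 : ℝ), B * c ^ a * Real.exp (a * (B * l) - c * Real.exp (B * l)) := by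
  have himg : (fun l : ℝ => c * Real.exp (B * l)) '' Set.Ioi 0 = Set.Ioi c := by
    ext u
    simp only [Set.mem_image, Set.mem_Ioi]
    constructor
    · rintro ⟨l, hl, rfl⟩
      have : 1 < Real.exp (B * l) := Real.one_lt_exp_iff.2 (by positivity)
      nlinarith
    · intro hu
      have h1 : 1 < u / c := by rwa [one_lt_div hc]
      refine ⟨Real.log (u / c) / B, by have := Real.log_pos h1; positivity, ?_⟩
      rw [mul_div_cancel₀ _ hB.ne', Real.exp_log (by linarith), mul_div_cancel₀ _ hc.ne']
  rw [← himg, integral_image_eq_integral_abs_deriv_smul measurableSet_Ioi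
    (f' := fun l => c * (Real.exp (B * l) * B))]
  · refine setIntegral_congr_fun measurableSet_Ioi (fun l _ => ?_)
    simp only [smul_eq_mul]
    have hp : 0 < Real.exp (B * l) := Real.exp_pos _
    rw [abs_of_nonneg (by positivity), Real.mul_rpow hc.le hp.le, Real.rpow_sub_one hc.ne',
      ← Real.exp_mul, sub_eq_add_neg (a * (B * l)), Real.exp_add,
      show B * l * (a - 1) = a * (B * l) - B * l by ring, Real.exp_sub]
    field_simp
  · intro l _
    have : HasDerivAt (fun l : ℝ => B * l) B l := by simpa using (hasDerivAt_id l).const_mul B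
    exact (this.exp.const_mul c).hasDerivWithinAt
  · intro l _ l' _ h
    simp only at h
    have := Real.exp_injective (mul_left_cancel₀ hc.ne' h)
    exact mul_left_cancel₀ hB.ne' this

noncomputable def auxI (B θ : ℝ) : ℝ :=
  ∫ u in Set.Ioi (θ / B ^ 2), u ^ (θ / B ^ 2 - 1) * Real.exp (-u)

noncomputable def auxPsi (B l : ℝ) : ℝ := (Real.exp (B * l) - 1 - B * l) / B ^ 2

/-- mixing density -/
noncomputable def auxW (B θ l : ℝ) : ℝ :=
  (θ / B ^ 2) ^ (θ / B ^ 2) / auxI B θ *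
    (B * Real.exp (- (θ / B ^ 2)) * Real.exp (- (θ * auxPsi B l)))

theorem auxI_nonneg (B θ : ℝ) (hB : 0 < B) (hθ : 0 < θ) : 0 ≤ auxI B θ := by
  apply setIntegral_nonneg measurableSet_Ioi
  intro u hu
  have : 0 < u := lt_trans (by positivity) hu
  positivity

theorem auxW_nonneg (B θ l : ℝ) (hB : 0 < B) (hθ : 0 < θ) : 0 ≤ auxW B θ l := by
  have := auxI_nonneg B θ hB hθ
  unfold auxW; positivity

theorem aux_expr (B θ ν s : ℝ) (hB : 0 < B) (hθ : 0 < θ) (hν : 0 ≤ ν) (hs : 0 ≤ s) :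
    mixedBennettExpr B θ ν s =
      ∫ l in Set.Ioi (0 : ℝ), auxW B θ l * Real.exp (l * s - ν * auxPsi B l) := by
  have g : ∀ a x : ℝ, 0 < a → Real.Gamma a * upperGammaReg a x =
      ∫ u in Set.Ioi x, u ^ (a - 1) * Real.exp (-u) := by
    intro a x ha
    rw [upperGammaReg, mul_div_cancel₀ _ (Real.Gamma_pos_of_pos ha).ne']
  have hc : 0 < (ν + θ) / B ^ 2 := by positivity
  rw [mixedBennettExpr, g _ _ (by positivity), g _ _ (by positivity),
    aux_cov B ((ν + θ) / B ^ 2) _ hB hc, ← integral_div, ← integral_const_mul,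
    ← integral_mul_const]
  refine setIntegral_congr_fun measurableSet_Ioi (fun l _ => ?_)
  have hcp : 0 < ((ν + θ) / B ^ 2) ^ ((B * s + ν + θ) / B ^ 2) := Real.rpow_pos_of_pos hc _
  have hE : Real.exp ((B * s + ν + θ) / B ^ 2 * (B * l) - (ν + θ) / B ^ 2 * Real.exp (B * l)) *
      Real.exp (ν / B ^ 2) = Real.exp (- (θ / B ^ 2)) * Real.exp (- (θ * auxPsi B l)) *
      Real.exp (l * s - ν * auxPsi B l) := by
    rw [← Real.exp_add, ← Real.exp_add, ← Real.exp_add]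
    congr 1
    unfold auxPsi
    field_simp
    ring
  change _ / auxI B θ * (_) * _ = _
  rw [auxW, mul_right_comm B, mul_div_assoc, div_self hcp.ne', mul_one]
  linear_combination ((θ / B ^ 2) ^ (θ / B ^ 2) / auxI B θ * B) * hE

theorem auxW_lint (B θ : ℝ) (hB : 0 < B) (hθ : 0 < θ) :
    ∫⁻ l in Set.Ioi (0 : ℝ), ENNReal.ofReal (auxW B θ l) ≤ 1 := by
  by_cases h0 : auxI B θ = 0
  · simp [auxW, h0]
  have h1 := aux_expr B θ 0 0 hB hθ le_rfl le_rfl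
  have h2 : mixedBennettExpr B θ 0 0 = 1 := by
    have hc : 0 < θ / B ^ 2 := by positivity
    have g : Real.Gamma (θ / B ^ 2) * upperGammaReg (θ / B ^ 2) (θ / B ^ 2) = auxI B θ := by
      rw [upperGammaReg, mul_div_cancel₀ _ (Real.Gamma_pos_of_pos hc).ne']; rfl
    have hcp : 0 < (θ / B ^ 2) ^ (θ / B ^ 2) := Real.rpow_pos_of_pos hc _
    simp only [mixedBennettExpr, mul_zero, zero_add, g]
    simp
    field_simp
  rw [h2] at h1
  simp only [mul_zero, zero_mul, sub_zero, Real.exp_zero, mul_one] at h1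
  have hi : Integrable (fun l => auxW B θ l) (volume.restrict (Set.Ioi (0 : ℝ))) := by
    by_contra hn
    rw [integral_undef hn] at h1
    exact one_ne_zero h1
  rw [← ofReal_integral_eq_lintegral_ofReal hi (ae_of_all _ fun l => auxW_nonneg B θ l hB hθ), ← h1]
  simp

theorem aux_ofReal_integral_le {α : Type*} {m : MeasurableSpace α} {μ : Measure α} (f : α → ℝ)
    (hf : 0 ≤ᵐ[μ] f) : ENNReal.ofReal (∫ x, f x ∂μ) ≤ ∫⁻ x, ENNReal.ofReal (f x) ∂μ := by
  by_cases hi : Integrable f μ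
  · rw [ofReal_integral_eq_lintegral_ofReal hi hf]
  · simp [integral_undef hi]

theorem auxPsi_nonneg (B l : ℝ) : 0 ≤ auxPsi B l := by
  have := Real.add_one_le_exp (B * l)
  unfold auxPsi
  apply div_nonneg _ (sq_nonneg _)
  linarith

/-- pointwise comparison with the mixture -/
theorem aux_expr_le (B θ ν νh s : ℝ) (hB : 0 < B) (hθ : 0 < θ) (hν : 0 ≤ ν) (hνh : ν ≤ νh)
    (hs : 0 ≤ s) :
    ENNReal.ofReal (mixedBennettExpr B θ νh s) ≤
      2 * ∫⁻ l in Set.Ioi (0 : ℝ), ENNReal.ofReal (auxW B θ l) *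
        ENNReal.ofReal (Real.cosh (l * s) * Real.exp (- (ν * auxPsi B l))) := by
  rw [aux_expr B θ νh s hB hθ (hν.trans hνh) hs]
  refine (aux_ofReal_integral_le _ (ae_of_all _ fun l =>
    mul_nonneg (auxW_nonneg B θ l hB hθ) (Real.exp_pos _).le)).trans ?_
  rw [← lintegral_const_mul' _ _ (by simp)]
  refine lintegral_mono fun l => ?_
  have h2 : (2 : ENNReal) = ENNReal.ofReal 2 := by simp
  rw [h2, ← ENNReal.ofReal_mul (auxW_nonneg B θ l hB hθ), ← ENNReal.ofReal_mul (by norm_num)]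
  apply ENNReal.ofReal_le_ofReal
  have hw := auxW_nonneg B θ l hB hθ
  have hp := auxPsi_nonneg B l
  rw [mul_left_comm]
  refine mul_le_mul_of_nonneg_left ?_ hw
  rw [sub_eq_add_neg, Real.exp_add, ← mul_assoc]
  have h3 : Real.exp (l * s) ≤ 2 * Real.cosh (l * s) := by
    rw [Real.cosh_eq]; linarith [Real.exp_pos (-(l * s))]
  have h4 : Real.exp (-(νh * auxPsi B l)) ≤ Real.exp (-(ν * auxPsi B l)) := by
    gcongr
  gcongr

theorem aux_onestep {Ω : Type*} {m m0 : MeasurableSpace Ω} {μ : Measure Ω}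
    [IsProbabilityMeasure μ] (hm : m ≤ m0) (y g q ν e s s' : Ω → ℝ) (B σ l K : ℝ)
    (hB : 0 < B) (hl : 0 ≤ l)
    (hy : StronglyMeasurable[m] y) (hg : StronglyMeasurable[m] g) (hq : StronglyMeasurable[m] q)
    (hν : StronglyMeasurable[m] ν) (hν0 : ∀ ω, 0 ≤ ν ω)
    (hy0 : ∀ ω, 0 ≤ y ω) (hys : ∀ ω, y ω ≤ s ω) (hg0 : ∀ ω, 0 ≤ g ω) (hg1 : ∀ ω, g ω ≤ 1)
    (hqy : ∀ ω, |q ω| ≤ y ω * g ω)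
    (hs' : ∀ ω, s' ω ^ 2 = y ω ^ 2 + 2 * (e ω * q ω) + e ω ^ 2 * g ω ^ 2)
    (heB : ∀ᵐ ω ∂μ, |e ω| ≤ B) (hyK : ∀ᵐ ω ∂μ, y ω ≤ K) (hei : Integrable e μ)
    (he0 : μ[e | m] =ᵐ[μ] fun _ => 0) (he2 : μ[fun ω => e ω ^ 2 | m] =ᵐ[μ] fun _ => σ ^ 2)
    (A : Set Ω) (hA : MeasurableSet[m] A) :
    ∫⁻ ω in A, ENNReal.ofReal (Real.cosh (l * s' ω) *
        Real.exp (- ((ν ω + σ ^ 2 * g ω ^ 2) * auxPsi B l))) ∂μ ≤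
      ∫⁻ ω in A, ENNReal.ofReal (Real.cosh (l * s ω) * Real.exp (- (ν ω * auxPsi B l))) ∂μ := by
  have hp := auxPsi_nonneg B l
  set p := auxPsi B l with hpdef
  let E : Ω → ℝ := fun ω => Real.exp (- ((ν ω + σ ^ 2 * g ω ^ 2) * p))
  let U1 : Ω → ℝ := fun ω => Real.cosh (l * y ω) * E ω
  let U2 : Ω → ℝ := fun ω => U1 ω * (g ω ^ 2 * p)
  let U3 : Ω → ℝ := fun ω => (l ^ 2 * q ω * (Real.sinh (l * y ω) / (l * y ω))) * E ω
  have hE0 : ∀ ω, 0 < E ω := fun ω => Real.exp_pos _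
  have hE1 : ∀ ω, E ω ≤ 1 := fun ω => by
    apply Real.exp_le_one_iff.2
    have := hν0 ω
    have : 0 ≤ (ν ω + σ ^ 2 * g ω ^ 2) * p := by positivity
    linarith
  have mE : StronglyMeasurable[m] E :=
    Real.continuous_exp.comp_stronglyMeasurable
      (((hν.add ((hg.pow 2).const_mul _)).mul_const p).neg)
  have mU1 : StronglyMeasurable[m] U1 :=
    (Real.continuous_cosh.comp_stronglyMeasurable (hy.const_mul l)).mul mE
  have mU2 : StronglyMeasurable[m] U2 := mU1.mul ((hg.pow 2).mul_const p)
  have mU3 : StronglyMeasurable[m] U3 :=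
    ((hq.const_mul _).mul ((Real.continuous_sinh.comp_stronglyMeasurable (hy.const_mul l)).div
      (hy.const_mul l))).mul mE
  have b1 : ∀ᵐ ω ∂μ, |U1 ω| ≤ Real.cosh (l * K) := by
    filter_upwards [hyK] with ω h
    have h0 := hy0 ω
    rw [abs_of_nonneg (mul_nonneg (Real.cosh_pos _).le (hE0 ω).le)]
    refine (mul_le_of_le_one_right (Real.cosh_pos _).le (hE1 ω)).trans ?_
    rw [Real.cosh_le_cosh, abs_of_nonneg (by positivity), abs_of_nonneg (mul_nonneg hl (h0.trans h))]
    gcongr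
  have b2 : ∀ᵐ ω ∂μ, |U2 ω| ≤ Real.cosh (l * K) * p := by
    filter_upwards [b1] with ω h
    have h0 := hg0 ω
    rw [abs_mul, abs_of_nonneg (by positivity : 0 ≤ g ω ^ 2 * p)]
    have : g ω ^ 2 ≤ 1 := pow_le_one₀ h0 (hg1 ω)
    refine mul_le_mul h (mul_le_of_le_one_left hp this) (by positivity) (Real.cosh_pos _).le
  have b3 : ∀ᵐ ω ∂μ, |U3 ω| ≤ l * Real.cosh (l * K) := by
    filter_upwards [hyK] with ω h
    have h0 := hy0 ω
    have hq1 : |q ω| ≤ y ω := (hqy ω).trans (mul_le_of_le_one_right h0 (hg1 ω))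
    have hsh : 0 ≤ Real.sinh (l * y ω) := Real.sinh_nonneg_iff.2 (by positivity)
    have hsh2 : 0 ≤ Real.sinh (l * y ω) / (l * y ω) := by positivity
    rw [abs_mul, abs_of_pos (hE0 ω)]
    refine (mul_le_of_le_one_right (abs_nonneg _) (hE1 ω)).trans ?_
    rw [abs_mul, abs_mul, abs_of_nonneg hsh2, abs_of_nonneg (by positivity : 0 ≤ l ^ 2)]
    calc l ^ 2 * |q ω| * (Real.sinh (l * y ω) / (l * y ω))
        ≤ l ^ 2 * y ω * (Real.sinh (l * y ω) / (l * y ω)) := by gcongr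
      _ = l * (Real.sinh (l * y ω) * ((l * y ω) / (l * y ω))) := by ring
      _ ≤ l * Real.sinh (l * y ω) := by
          gcongr
          exact mul_le_of_le_one_right hsh (div_self_le_one _)
      _ ≤ l * Real.cosh (l * y ω) := by gcongr; exact (Real.sinh_lt_cosh _).le
      _ ≤ l * Real.cosh (l * K) := by
          gcongr
          rw [Real.cosh_le_cosh, abs_of_nonneg (by positivity),
            abs_of_nonneg (mul_nonneg hl (h0.trans h))]
          gcongr
  have he2i : Integrable (fun ω => e ω ^ 2) μ := by
    have := hei.bdd_mul (c := B) hei.aestronglyMeasurable (by simpa using heB)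
    simpa [pow_two] using this
  obtain ⟨i2, c2⟩ := aux_cond hm U2 (fun ω => e ω ^ 2) mU2 _ b2 he2i (σ ^ 2) he2 A hA
  obtain ⟨i3, c3⟩ := aux_cond hm U3 e mU3 _ b3 hei 0 he0 A hA
  have i1 : Integrable U1 μ :=
    Integrable.of_bound (mU1.mono hm).aestronglyMeasurable _ (by simpa using b1)
  have i2' : Integrable (fun ω => U2 ω * σ ^ 2) μ :=
    (Integrable.of_bound (mU2.mono hm).aestronglyMeasurable _ (by simpa using b2)).mul_const _
  have hdet : ∀ᵐ ω ∂μ, Real.cosh (l * s' ω) * E ω ≤ U1 ω + U2 ω * e ω ^ 2 + U3 ω * e ω := by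
    filter_upwards [heB] with ω h
    have := aux_step B l (y ω) (e ω) (g ω) (q ω) (s' ω) hB hl (hy0 ω) (hg0 ω) (hg1 ω) h (hqy ω)
      (hs' ω)
    have h2 := mul_le_mul_of_nonneg_right this (hE0 ω).le
    refine h2.trans (le_of_eq ?_)
    simp only [U1, U2, U3, hpdef, auxPsi]
    ring
  have hdetA := ae_restrict_of_ae (s := A) hdet
  calc ∫⁻ ω in A, ENNReal.ofReal (Real.cosh (l * s' ω) * E ω) ∂μ
      ≤ ∫⁻ ω in A, ENNReal.ofReal (U1 ω + U2 ω * e ω ^ 2 + U3 ω * e ω) ∂μ := by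
        refine lintegral_mono_ae ?_
        filter_upwards [hdetA] with ω h
        exact ENNReal.ofReal_le_ofReal h
    _ = ENNReal.ofReal (∫ ω in A, (U1 ω + U2 ω * e ω ^ 2 + U3 ω * e ω) ∂μ) := by
        refine (ofReal_integral_eq_lintegral_ofReal ((i1.add i2).add i3).integrableOn ?_).symm
        filter_upwards [hdetA] with ω h
        exact (mul_pos (Real.cosh_pos _) (hE0 ω)).le.trans h
    _ = ENNReal.ofReal (∫ ω in A, (U1 ω + U2 ω * σ ^ 2) ∂μ) := by
        congr 1
        have e1 : ∫ ω in A, (U1 ω + U2 ω * e ω ^ 2 + U3 ω * e ω) ∂μ =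
          ∫ ω in A, (U1 ω + U2 ω * e ω ^ 2) ∂μ + ∫ ω in A, U3 ω * e ω ∂μ :=
          integral_add (i1.add i2).integrableOn i3.integrableOn
        rw [e1, integral_add i1.integrableOn i2.integrableOn, c2, c3,
          integral_add i1.integrableOn i2'.integrableOn]
        simp
    _ ≤ ∫⁻ ω in A, ENNReal.ofReal (U1 ω + U2 ω * σ ^ 2) ∂μ := by
        refine aux_ofReal_integral_le _ (ae_of_all _ fun ω => ?_)
        have h1 : 0 ≤ U1 ω := (mul_pos (Real.cosh_pos _) (hE0 ω)).le
        have h2 : 0 ≤ U2 ω := mul_nonneg h1 (by positivity)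
        positivity
    _ ≤ _ := by
        refine lintegral_mono fun ω => ENNReal.ofReal_le_ofReal ?_
        have h0 := hy0 ω
        have h1 : Real.cosh (l * y ω) ≤ Real.cosh (l * s ω) := by
          rw [Real.cosh_le_cosh, abs_of_nonneg (by positivity),
            abs_of_nonneg (mul_nonneg hl (h0.trans (hys ω)))]
          have := hys ω
          gcongr
        have h2 : (1 + σ ^ 2 * g ω ^ 2 * p) * E ω ≤ Real.exp (-(ν ω * p)) := by
          have h3 := Real.add_one_le_exp (σ ^ 2 * g ω ^ 2 * p)
          calc (1 + σ ^ 2 * g ω ^ 2 * p) * E ω ≤ Real.exp (σ ^ 2 * g ω ^ 2 * p) * E ω :=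
                mul_le_mul_of_nonneg_right (by linarith) (hE0 ω).le
            _ = _ := by
                simp only [E]
                rw [← Real.exp_add]; congr 1; ring
        calc U1 ω + U2 ω * σ ^ 2 = Real.cosh (l * y ω) * ((1 + σ ^ 2 * g ω ^ 2 * p) * E ω) := by
              simp only [U1, U2]; ring
          _ ≤ Real.cosh (l * s ω) * Real.exp (-(ν ω * p)) :=
              mul_le_mul h1 h2 (by have := hE0 ω; positivity) (Real.cosh_pos _).le

theorem stmt_8
    {H : Type*} [NormedAddCommGroup H] [InnerProductSpace ℝ H] [CompleteSpace H]
    [SecondCountableTopology H]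
    {Ω : Type*} {m0 : MeasurableSpace Ω} {μ : Measure Ω} [IsProbabilityMeasure μ]
    (ℱ : Filtration ℕ m0)
    (X : ℕ → Ω → H) (ε : ℕ → Ω → ℝ)
    (hX : ∀ t, 1 ≤ t → StronglyMeasurable[ℱ (t - 1)] (X t))
    (hεmeas : ∀ t, 1 ≤ t → StronglyMeasurable[ℱ t] (ε t))
    (hεint : ∀ t, 1 ≤ t → Integrable (ε t) μ)
    (hε0 : ∀ t, 1 ≤ t → μ[ε t | ℱ (t - 1)] =ᵐ[μ] 0)
    (ρ : ℝ) (hρ : 0 < ρ)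
    (Q Qinv : ℕ → Ω → H →L[ℝ] H)
    (hQpos : ∀ t ω, (Q t ω).IsPositive)
    (hQsq : ∀ t ω, Q t ω ∘L Q t ω =
      ρ • (1 : H →L[ℝ] H) + ∑ i ∈ Finset.Icc 1 t, outerProd (X i ω))
    (hQinv : ∀ t ω, Qinv t ω ∘L Q t ω = 1 ∧ Q t ω ∘L Qinv t ω = 1)
    (B : ℝ) (hB : 0 < B) (σ : ℝ)
    (hbdd : ∀ t, 1 ≤ t → ∀ᵐ ω ∂μ, |ε t ω| ≤ B)
    (hvar : ∀ t, 1 ≤ t →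
      μ[fun ω => (ε t ω - (μ[ε t | ℱ (t - 1)]) ω) ^ 2 | ℱ (t - 1)] =ᵐ[μ]
        fun _ => σ ^ 2)
    (σhat : ℕ → Ω → ℝ)
    (hσhatmeas : ∀ t, 1 ≤ t → StronglyMeasurable[ℱ t] (σhat t))
    (δ₁ δ₂ : ℝ) (hδ₁ : δ₁ ∈ Set.Ioo (0 : ℝ) 1) (hδ₂ : δ₂ ∈ Set.Ioo (0 : ℝ) 1)
    (hσhat : μ {ω | ∃ t, 1 ≤ t ∧ σhat t ω ^ 2 < σ ^ 2} ≤ ENNReal.ofReal δ₁)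
    (θ : ℝ) (hθ : 0 < θ) :
    ENNReal.ofReal (1 - (δ₁ + δ₂)) ≤
      μ {ω | ∀ t, 1 ≤ t →
        mixedBennettExpr B θ
          (σhat t ω ^ 2 * ∑ i ∈ Finset.Icc 1 t, ‖Qinv i ω (X i ω)‖ ^ 2)
          ‖Qinv t ω (∑ i ∈ Finset.Icc 1 t, ε i ω • X i ω)‖ < 2 / δ₂} := by
  let M : ℕ → Ω → H := fun n ω => ∑ i ∈ Finset.Icc 1 n, ε i ω • X i ω
  let s : ℕ → Ω → ℝ := fun n ω => ‖Qinv n ω (M n ω)‖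
  let N : ℕ → Ω → ℝ := fun n ω => ∑ i ∈ Finset.Icc 1 n, ‖Qinv i ω (X i ω)‖ ^ 2
  let ν : ℕ → Ω → ℝ := fun n ω => σ ^ 2 * N n ω
  -- operator facts
  have op := fun n ω => aux_op (Q n ω) (Qinv n ω) (Q (n + 1) ω) (Qinv (n + 1) ω) (X (n + 1) ω)
        (hQpos _ _) (hQpos _ _)
        (by rw [hQsq, hQsq, Finset.sum_Icc_succ_top (by omega), add_assoc])
        (hQinv _ _).1 (hQinv _ _).2 (hQinv _ _).2
  have sym := fun n ω => aux_sym (Q n ω) (Qinv n ω) (hQpos _ _) (hQinv _ _).2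
  have hMs : ∀ n ω, M (n + 1) ω = M n ω + ε (n + 1) ω • X (n + 1) ω := fun n ω => by
    simp only [M]; rw [Finset.sum_Icc_succ_top (by omega)]
  have hNs : ∀ n ω, N (n + 1) ω = N n ω + ‖Qinv (n + 1) ω (X (n + 1) ω)‖ ^ 2 := fun n ω => by
    simp only [N]; rw [Finset.sum_Icc_succ_top (by omega)]
  have hN0 : ∀ n ω, 0 ≤ N n ω := fun n ω => Finset.sum_nonneg fun i _ => by positivity
  have hν0 : ∀ n ω, 0 ≤ ν n ω := fun n ω => mul_nonneg (sq_nonneg _) (hN0 n ω)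
  -- measurability
  have hX' : ∀ i n, 1 ≤ i → i ≤ n + 1 → StronglyMeasurable[ℱ n] (X i) := fun i n h1 h2 =>
    (hX i h1).mono (ℱ.mono (by omega))
  have hR : ∀ k n, k ≤ n + 1 → ∀ y : Ω → H, StronglyMeasurable[ℱ n] y →
      StronglyMeasurable[ℱ n] (fun ω => Qinv k ω (Qinv k ω (y ω))) := fun k n hk y hy =>
    aux_meas X ρ hρ Q Qinv hQpos hQsq hQinv (ℱ n) k (fun i h1 h2 => hX' i n h1 (by omega)) y hy
  have hnorm : ∀ k n, k ≤ n + 1 → ∀ y : Ω → H, StronglyMeasurable[ℱ n] y →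
      StronglyMeasurable[ℱ n] (fun ω => ‖Qinv k ω (y ω)‖) := by
    intro k n hk y hy
    have : (fun ω => ‖Qinv k ω (y ω)‖) =
        fun ω => Real.sqrt ⟪y ω, Qinv k ω (Qinv k ω (y ω))⟫ := by
      funext ω
      rw [← sym, real_inner_self_eq_norm_sq, Real.sqrt_sq (norm_nonneg _)]
    rw [this]
    exact Real.continuous_sqrt.comp_stronglyMeasurable (hy.inner (hR k n hk y hy))
  have hMm : ∀ n, StronglyMeasurable[ℱ n] (M n) := by
    intro n
    refine Finset.stronglyMeasurable_fun_sum _ fun i hi => ?_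
    rw [Finset.mem_Icc] at hi
    exact ((hεmeas i hi.1).mono (ℱ.mono hi.2)).smul (hX' i n hi.1 (by omega))
  have hsm : ∀ n, StronglyMeasurable[ℱ n] (s n) := fun n => hnorm n n (by omega) _ (hMm n)
  have hνm : ∀ n, StronglyMeasurable[ℱ n] (ν n) := by
    intro n
    refine StronglyMeasurable.const_mul ?_ _
    refine Finset.stronglyMeasurable_fun_sum _ fun i hi => ?_
    rw [Finset.mem_Icc] at hi
    exact (hnorm i n (by omega) _ (hX' i n hi.1 (by omega))).pow 2
  -- boundedness
  have hsb : ∀ n, ∀ᵐ ω ∂μ, s n ω ≤ n * B := by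
    intro n
    induction n with
    | zero => exact ae_of_all _ fun ω => by simp [s, M]
    | succ n ih =>
      filter_upwards [ih, hbdd (n + 1) (by omega)] with ω h1 h2
      simp only [s] at h1 ⊢
      rw [hMs, map_add, map_smul]
      refine (norm_add_le _ _).trans ?_
      rw [norm_smul, Real.norm_eq_abs]
      have h3 := (op n ω).2.1 (M n ω)
      have h4 := mul_le_mul h2 (op n ω).2.2 (norm_nonneg _) hB.le
      push_cast
      linarith
  -- conditional second moment
  have hε2 : ∀ n, μ[fun ω => ε (n + 1) ω ^ 2 | ℱ n] =ᵐ[μ] fun _ => σ ^ 2 := by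
    intro n
    refine EventuallyEq.trans ?_ (hvar (n + 1) (by omega))
    refine condExp_congr_ae ?_
    filter_upwards [hε0 (n + 1) (by omega)] with ω h
    rw [h]; simp
  -- the mixture process
  let f : ℕ → Ω → ENNReal := fun n ω => ∫⁻ l in Set.Ioi (0 : ℝ), ENNReal.ofReal (auxW B θ l) *
        ENNReal.ofReal (Real.cosh (l * s n ω) * Real.exp (- (ν n ω * auxPsi B l)))
  have hψc : Continuous (auxPsi B) := by unfold auxPsi; fun_prop
  have hWc : Continuous (auxW B θ) := by unfold auxW; fun_prop
  have hjoint : ∀ (m : MeasurableSpace Ω) (n : ℕ), Measurable[m] (s n) → Measurable[m] (ν n) →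
      Measurable (fun z : Ω × ℝ => ENNReal.ofReal (auxW B θ z.2) *
        ENNReal.ofReal (Real.cosh (z.2 * s n z.1) * Real.exp (- (ν n z.1 * auxPsi B z.2)))) := by
    intro m n h1 h2
    have a1 : Measurable (fun z : Ω × ℝ => s n z.1) := h1.comp measurable_fst
    have a2 : Measurable (fun z : Ω × ℝ => ν n z.1) := h2.comp measurable_fst
    have a3 : Measurable (fun z : Ω × ℝ => auxPsi B z.2) := hψc.measurable.comp measurable_snd
    have a4 : Measurable (fun z : Ω × ℝ => auxW B θ z.2) := hWc.measurable.comp measurable_snd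
    have a5 : Measurable (fun z : Ω × ℝ => Real.cosh (z.2 * s n z.1)) :=
      Real.measurable_cosh.comp (measurable_snd.mul a1)
    have a6 : Measurable (fun z : Ω × ℝ => Real.exp (- (ν n z.1 * auxPsi B z.2))) :=
      Real.measurable_exp.comp (a2.mul a3).neg
    exact a4.ennreal_ofReal.mul (a5.mul a6).ennreal_ofReal
  have hfm : ∀ n, Measurable[ℱ n] (f n) := fun n =>
    @Measurable.lintegral_prod_right' _ _ (ℱ n) _ _ _ _
      (hjoint (ℱ n) n (hsm n).measurable (hνm n).measurable)
  have hswap : ∀ n (A : Set Ω), ∫⁻ ω in A, f n ω ∂μ =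
      ∫⁻ l in Set.Ioi (0 : ℝ), ENNReal.ofReal (auxW B θ l) *
        ∫⁻ ω in A, ENNReal.ofReal (Real.cosh (l * s n ω) * Real.exp (- (ν n ω * auxPsi B l))) ∂μ := by
    intro n A
    simp only [f]
    rw [lintegral_lintegral_swap
      (hjoint m0 n ((hsm n).mono (ℱ.le n)).measurable ((hνm n).mono (ℱ.le n)).measurable).aemeasurable]
    refine lintegral_congr fun l => ?_
    rw [lintegral_const_mul' _ _ ENNReal.ofReal_ne_top]
  have hfs : ∀ n A, MeasurableSet[ℱ n] A → ∫⁻ ω in A, f (n + 1) ω ∂μ ≤ ∫⁻ ω in A, f n ω ∂μ := by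
    intro n A hA
    rw [hswap, hswap]
    refine setLIntegral_mono' measurableSet_Ioi fun l hl => ?_
    refine mul_le_mul_right ?_ _
    have hone := aux_onestep (μ := μ) (ℱ.le n) (fun ω => ‖Qinv (n + 1) ω (M n ω)‖)
      (fun ω => ‖Qinv (n + 1) ω (X (n + 1) ω)‖)
      (fun ω => ⟪Qinv (n + 1) ω (M n ω), Qinv (n + 1) ω (X (n + 1) ω)⟫)
      (ν n) (ε (n + 1)) (s n) (s (n + 1)) B σ l (n * B) hB (le_of_lt hl)
      (hnorm _ _ le_rfl _ (hMm n)) (hnorm _ _ le_rfl _ (hX' _ _ (by omega) le_rfl))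
      (by
        have : (fun ω => ⟪Qinv (n + 1) ω (M n ω), Qinv (n + 1) ω (X (n + 1) ω)⟫) =
            fun ω => ⟪M n ω, Qinv (n + 1) ω (Qinv (n + 1) ω (X (n + 1) ω))⟫ := by
          funext ω; rw [sym]
        rw [this]
        exact (hMm n).inner (hR _ _ le_rfl _ (hX' _ _ (by omega) le_rfl)))
      (hνm n) (hν0 n) (fun ω => norm_nonneg _) (fun ω => (op n ω).2.1 _) (fun ω => norm_nonneg _)
      (fun ω => (op n ω).2.2) (fun ω => abs_real_inner_le_norm _ _)
      (fun ω => by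
        simp only [s]
        rw [hMs, map_add, map_smul, norm_add_sq_real, inner_smul_right, norm_smul, mul_pow,
          Real.norm_eq_abs, sq_abs])
      (hbdd _ (by omega))
      (by filter_upwards [hsb n] with ω h using ((op n ω).2.1 _).trans h)
      (hεint _ (by omega)) (hε0 (n + 1) (by omega)) (hε2 n) A hA
    refine le_trans (le_of_eq ?_) hone
    simp only [ν, hNs, mul_add]
  have hf0 : ∫⁻ ω, f 0 ω ∂μ ≤ 1 := by
    have : ∀ ω, f 0 ω ≤ 1 := by
      intro ω
      refine le_trans (le_of_eq ?_) (auxW_lint B θ hB hθ)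
      simp [f, s, M, ν, N]
    calc ∫⁻ ω, f 0 ω ∂μ ≤ ∫⁻ _, 1 ∂μ := lintegral_mono this
      _ = 1 := by simp
  have hville := (aux_ville ℱ f hfm hfs (ENNReal.ofReal (1 / δ₂))).trans hf0
  have hE2 : μ {ω | ∃ n, ENNReal.ofReal (1 / δ₂) ≤ f n ω} ≤ ENNReal.ofReal δ₂ := by
    have h1 : ENNReal.ofReal δ₂ * ENNReal.ofReal (1 / δ₂) = 1 := by
      rw [← ENNReal.ofReal_mul hδ₂.1.le, mul_one_div_cancel hδ₂.1.ne', ENNReal.ofReal_one]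
    calc μ {ω | ∃ n, ENNReal.ofReal (1 / δ₂) ≤ f n ω}
        = ENNReal.ofReal δ₂ * (ENNReal.ofReal (1 / δ₂) *
            μ {ω | ∃ n, ENNReal.ofReal (1 / δ₂) ≤ f n ω}) := by rw [← mul_assoc, h1, one_mul]
      _ ≤ ENNReal.ofReal δ₂ * 1 := by gcongr
      _ = _ := mul_one _
  set T := {ω | ∀ t, 1 ≤ t →
        mixedBennettExpr B θ
          (σhat t ω ^ 2 * ∑ i ∈ Finset.Icc 1 t, ‖Qinv i ω (X i ω)‖ ^ 2)
          ‖Qinv t ω (∑ i ∈ Finset.Icc 1 t, ε i ω • X i ω)‖ < 2 / δ₂} with hT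
  have hcover : Set.univ ⊆ T ∪ ({ω | ∃ t, 1 ≤ t ∧ σhat t ω ^ 2 < σ ^ 2} ∪
      {ω | ∃ n, ENNReal.ofReal (1 / δ₂) ≤ f n ω}) := by
    intro ω _
    by_contra hcon
    simp only [Set.mem_union, not_or] at hcon
    obtain ⟨hc1, hc2, hc3⟩ := hcon
    apply hc1
    intro t ht
    have h2 : σ ^ 2 ≤ σhat t ω ^ 2 := by
      by_contra h
      exact hc2 ⟨t, ht, not_le.1 h⟩
    have h3 : f t ω < ENNReal.ofReal (1 / δ₂) := by
      by_contra h
      exact hc3 ⟨t, not_lt.1 h⟩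
    have h4 := aux_expr_le B θ (ν t ω) (σhat t ω ^ 2 * N t ω) (s t ω) hB hθ (hν0 t ω)
      (mul_le_mul_of_nonneg_right h2 (hN0 t ω)) (norm_nonneg _)
    have h5 : (2 : ENNReal) * f t ω < ENNReal.ofReal (2 / δ₂) := by
      have : ENNReal.ofReal (2 / δ₂) = 2 * ENNReal.ofReal (1 / δ₂) := by
        rw [show (2 : ENNReal) = ENNReal.ofReal 2 by simp, ← ENNReal.ofReal_mul (by norm_num)]
        congr 1; ring
      rw [this]
      exact ENNReal.mul_lt_mul_right (by simp) (by simp) h3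
    have h6 := h4.trans_lt h5
    exact (ENNReal.ofReal_lt_ofReal_iff (div_pos two_pos hδ₂.1)).1 h6
  have hfin : (1 : ENNReal) ≤ μ T + (ENNReal.ofReal δ₁ + ENNReal.ofReal δ₂) := by
    calc (1 : ENNReal) = μ Set.univ := measure_univ.symm
      _ ≤ _ := measure_mono hcover
      _ ≤ μ T + (μ {ω | ∃ t, 1 ≤ t ∧ σhat t ω ^ 2 < σ ^ 2} +
            μ {ω | ∃ n, ENNReal.ofReal (1 / δ₂) ≤ f n ω}) :=
          (measure_union_le _ _).trans (by gcongr; exact measure_union_le _ _)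
      _ ≤ _ := by gcongr
  rw [ENNReal.ofReal_sub _ (add_nonneg hδ₁.1.le hδ₂.1.le), ENNReal.ofReal_one,
    ENNReal.ofReal_add hδ₁.1.le hδ₂.1.le]
  exact tsub_le_iff_right.2 hfin
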